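/- For every q ∈ ℂ with 1/2 ≤ |q| < 1, the partial theta function θ(q,·) has no multiple zeros ζ with |ζ| > 8^11: there is no ζ ∈ ℂ with |ζ| > 8^11, θ(q,ζ) = 0 and ∂θ/∂x(q,ζ) = 0. -/

import Mathlib

/-!
Put `Θ(x) = θ(q, x) + x⁻¹ θ(q, x⁻¹) = ∑ q ^ (n (n + 1) / 2) x ^ n`, the sum running over `ℤ`. If `ζ`
is a double zero of `θ(q, ·)`, only the second summand survives, so that `Θ(ζ)` and `ζ Θ'(ζ)` are
both `O(1 / |ζ|)`. The quasi-periodicity `Θ(x) = q ^ (k (k + 1) / 2) x ^ k Θ(x q ^ k)` transports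
this to a point `y = ζ q ^ k` with `|q| < |y| < |q|⁻¹`. There the Jacobi triple product reads
`Θ(y) = (1 + y⁻¹) H(y)`, where `|H|` is bounded below and `y H'(y) / H(y)` is bounded above; the
only zero `y = -1` being simple, `Θ(y)` and `y Θ'(y)` cannot both be small. The gain
`|q| ^ (-k² / 2)` from the quasi-periodicity factor beats the bounds for `H`, which are of the
form `exp (-c / (1 - √|q|))`.
-/

open Finset Filter Topology

section FiniteProducts

variable {R : Type*} [CommRing R]

/-- The finite `q`-Pochhammer symbol `(a; q)_n`. -/
def qPochhammer (q a : R) (n : ℕ) : R := ∏ i ∈ range n, (1 - a * q ^ i)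

/-- The Gaussian binomial coefficient, defined by a `q`-Pascal recursion so that it makes sense for
every `q`, roots of unity included. -/
def gaussBinom (q : R) : ℕ → ℕ → R
  | _, 0 => 1
  | 0, _ + 1 => 0
  | n + 1, k + 1 => gaussBinom q n k + q ^ (k + 1) * gaussBinom q n (k + 1)

lemma qPochhammer_zero (q a : R) : qPochhammer q a 0 = 1 := prod_range_zero _

lemma qPochhammer_succ (q a : R) (n : ℕ) :
    qPochhammer q a (n + 1) = qPochhammer q a n * (1 - a * q ^ n) :=
  prod_range_succ _ _

lemma qPochhammer_succ' (q a : R) (n : ℕ) :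
    qPochhammer q a (n + 1) = (1 - a) * qPochhammer q (a * q) n := by
  simp only [qPochhammer, prod_range_succ', pow_succ', pow_zero, mul_one, mul_assoc]
  rw [mul_comm]

lemma gaussBinom_zero_right (q : R) (n : ℕ) : gaussBinom q n 0 = 1 := by
  cases n <;> rfl

lemma gaussBinom_succ_succ (q : R) (n k : ℕ) :
    gaussBinom q (n + 1) (k + 1) = gaussBinom q n k + q ^ (k + 1) * gaussBinom q n (k + 1) := rfl

lemma gaussBinom_eq_zero_of_lt (q : R) {n k : ℕ} (h : n < k) : gaussBinom q n k = 0 := by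
  induction n generalizing k with
  | zero => obtain ⟨k, rfl⟩ := Nat.exists_eq_add_one.2 h; rfl
  | succ n ih =>
    obtain ⟨k, rfl⟩ := Nat.exists_eq_add_one.2 (n.succ_pos.trans h)
    rw [gaussBinom_succ_succ, ih (by omega), ih (by omega), mul_zero, add_zero]

lemma gaussBinom_self (q : R) (n : ℕ) : gaussBinom q n n = 1 := by
  induction n with
  | zero => rfl
  | succ n ih =>
    rw [gaussBinom_succ_succ, ih, gaussBinom_eq_zero_of_lt q n.lt_succ_self, mul_zero, add_zero]

theorem gaussBinom_add_mul_qPochhammer (q : R) (a b : ℕ) :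
    gaussBinom q (a + b) a * (qPochhammer q q a * qPochhammer q q b) =
      qPochhammer q q (a + b) := by
  induction a generalizing b with
  | zero => rw [gaussBinom_zero_right, qPochhammer_zero, one_mul, one_mul, zero_add]
  | succ a iha =>
    induction b with
    | zero => rw [add_zero, gaussBinom_self, qPochhammer_zero, mul_one, one_mul]
    | succ b ihb =>
      have ha := iha (b + 1)
      rw [show a + 1 + b = a + (b + 1) by ring] at ihb
      rw [show a + 1 + (b + 1) = a + (b + 1) + 1 by ring, gaussBinom_succ_succ,
        qPochhammer_succ q q (a + (b + 1))]
      rw [qPochhammer_succ q q a] at ihb ⊢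
      rw [qPochhammer_succ q q b] at ha ⊢
      linear_combination (1 - q * q ^ a) * ha + q ^ (a + 1) * (1 - q * q ^ b) * ihb

theorem qPochhammer_neg_eq_sum_gaussBinom (q y : R) (n : ℕ) :
    qPochhammer q (-y) n = ∑ k ∈ range (n + 1), gaussBinom q n k * q ^ k.choose 2 * y ^ k := by
  induction n generalizing y with
  | zero => simp [qPochhammer_zero, gaussBinom_zero_right]
  | succ n ih =>
    have shift : ∑ k ∈ range (n + 1), gaussBinom q n k * q ^ k.choose 2 * (y * q) ^ k =
        ∑ k ∈ range (n + 1), gaussBinom q n (k + 1) * q ^ (k + 1).choose 2 * (y * q) ^ (k + 1)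
          + 1 := by
      have h := sum_range_succ' (fun k ↦ gaussBinom q n k * q ^ k.choose 2 * (y * q) ^ k) (n + 1)
      rw [sum_range_succ, gaussBinom_eq_zero_of_lt q n.lt_succ_self] at h
      simpa [gaussBinom_zero_right] using h
    rw [qPochhammer_succ', neg_mul, ih, sub_neg_eq_add, one_add_mul, mul_sum]
    nth_rw 1 [shift]
    rw [add_right_comm, ← sum_add_distrib, sum_range_succ' _ (n + 1), gaussBinom_zero_right]
    congr 1
    · refine sum_congr rfl fun k _ ↦ ?_
      rw [gaussBinom_succ_succ, Nat.choose_succ_succ' k 1, Nat.choose_one_right]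
      ring
    · simp

end FiniteProducts

section FiniteTripleProduct

variable {K : Type*} [Field K] {q x : K}

/-- The general term `q ^ (n (n + 1) / 2) x ^ n` of the bilateral theta series. The division is
integer division, exact because `n (n + 1)` is even. -/
def thetaTerm (q x : K) (n : ℤ) : K := q ^ (n * (n + 1) / 2) * x ^ n

lemma thetaTerm_natCast (q x : K) (n : ℕ) : thetaTerm q x n = q ^ (n * (n + 1) / 2) * x ^ n := by
  rw [thetaTerm, zpow_natCast, ← zpow_natCast q]
  norm_cast

lemma thetaTerm_neg_natCast_add_one (q x : K) (n : ℕ) :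
    thetaTerm q x (-(n + 1)) = x⁻¹ * (q ^ (n * (n + 1) / 2) * x⁻¹ ^ n) := by
  rw [← thetaTerm_natCast, thetaTerm, thetaTerm, show -((n : ℤ) + 1) * (-(n + 1) + 1) = n * (n + 1)
    by ring, ← inv_zpow', ← Nat.cast_succ, zpow_natCast, zpow_natCast, pow_succ]
  ring

lemma thetaTerm_add (hq : q ≠ 0) (hx : x ≠ 0) (n k : ℤ) :
    thetaTerm q x (n + k) = thetaTerm q x k * thetaTerm q (x * q ^ k) n := by
  have exponent : (n + k) * (n + k + 1) / 2 = k * (k + 1) / 2 + (n * (n + 1) / 2 + k * n) := by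
    obtain ⟨a, ha⟩ := Int.even_mul_succ_self n
    obtain ⟨b, hb⟩ := Int.even_mul_succ_self k
    have h : (n + k) * (n + k + 1) = 2 * (a + b + k * n) := by linear_combination ha + hb
    rw [h, ha, hb]
    omega
  rw [thetaTerm, thetaTerm, thetaTerm, exponent, zpow_add₀ hq, zpow_add₀ hq, zpow_add₀ hx,
    mul_zpow, ← zpow_mul]
  ring

lemma thetaTerm_one (q x : K) : thetaTerm q x 1 = q * x := by
  norm_num [thetaTerm]

lemma thetaTerm_add_one (hq : q ≠ 0) (hx : x ≠ 0) (n : ℤ) :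
    thetaTerm q x (n + 1) = thetaTerm q x n * (x * q ^ (n + 1)) := by
  rw [add_comm n, thetaTerm_add hq hx, thetaTerm_one, zpow_one_add₀ hq]
  ring

lemma thetaTerm_sub_one (hq : q ≠ 0) (hx : x ≠ 0) (n : ℤ) :
    thetaTerm q x (n - 1) = x⁻¹ * thetaTerm q (x / q) n := by
  have h := thetaTerm_add hq (div_ne_zero hx hq) (n - 1) 1
  rw [sub_add_cancel, zpow_one, thetaTerm_one, mul_div_cancel₀ x hq, div_mul_cancel₀ x hq] at h
  rw [h, inv_mul_cancel_left₀ hx]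

/-- The induction on `M` moves a factor from the second product to the first by the substitution
`x ↦ x / q`, down to the `q`-binomial theorem. -/
theorem qPochhammer_mul_qPochhammer_eq_sum_thetaTerm (hq : q ≠ 0) (hx : x ≠ 0) (N M : ℕ) :
    qPochhammer q (-(x * q)) N * qPochhammer q (-x⁻¹) M =
      ∑ k ∈ range (N + M + 1), gaussBinom q (N + M) k * thetaTerm q x (k - M) := by
  induction M generalizing N x with
  | zero =>
    rw [qPochhammer_zero, mul_one, qPochhammer_neg_eq_sum_gaussBinom]
    refine sum_congr rfl fun k _ ↦ ?_
    have exponent : k * (k + 1) / 2 = k + k.choose 2 := by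
      have h := Nat.choose_two_right (k + 1)
      rwa [Nat.choose_succ_succ' k 1, Nat.choose_one_right, Nat.add_sub_cancel, mul_comm, eq_comm]
        at h
    rw [add_zero, Nat.cast_zero, sub_zero, thetaTerm_natCast, exponent, pow_add, mul_pow]
    ring
  | succ M ih =>
    have move : qPochhammer q (-(x * q)) N * qPochhammer q (-x⁻¹) (M + 1) =
        x⁻¹ * (qPochhammer q (-(x / q * q)) (N + 1) * qPochhammer q (-(x / q)⁻¹) M) := by
      rw [qPochhammer_succ', qPochhammer_succ', div_mul_cancel₀ x hq, neg_mul, neg_mul, inv_div,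
        div_eq_mul_inv, mul_comm q]
      field_simp
      ring
    rw [move, ih (div_ne_zero hx hq), mul_sum, show N + 1 + M = N + (M + 1) by ring]
    refine sum_congr rfl fun k _ ↦ ?_
    rw [show (k : ℤ) - (M + 1 : ℕ) = k - M - 1 by push_cast; ring, thetaTerm_sub_one hq hx]
    ring

end FiniteTripleProduct

section InfiniteProduct

variable {q a : ℂ}

/-- The infinite `q`-Pochhammer symbol `(a; q)_∞`. -/
noncomputable def qPochhammerInf (q a : ℂ) : ℂ := ∏' i : ℕ, (1 - a * q ^ i)

lemma summable_norm_neg_mul_pow (hq : ‖q‖ < 1) (a : ℂ) : Summable fun i : ℕ ↦ ‖-(a * q ^ i)‖ := by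
  simp only [norm_neg, norm_mul, norm_pow]
  exact (summable_geometric_of_lt_one (norm_nonneg q) hq).mul_left _

lemma multipliable_one_sub_mul_pow (hq : ‖q‖ < 1) (a : ℂ) :
    Multipliable fun i : ℕ ↦ 1 - a * q ^ i := by
  simpa only [← sub_eq_add_neg] using
    multipliable_one_add_of_summable (summable_norm_neg_mul_pow hq a)

lemma tendsto_qPochhammer (hq : ‖q‖ < 1) (a : ℂ) :
    Tendsto (qPochhammer q a) atTop (𝓝 (qPochhammerInf q a)) :=
  (multipliable_one_sub_mul_pow hq a).hasProd.tendsto_prod_nat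

lemma qPochhammerInf_eq_one_sub_mul (hq : ‖q‖ < 1) (a : ℂ) :
    qPochhammerInf q a = (1 - a) * qPochhammerInf q (a * q) := by
  have h := multipliable_one_sub_mul_pow hq (a * q)
  simp only [mul_assoc, ← pow_succ'] at h
  have split := tprod_eq_zero_mul' (f := fun i ↦ 1 - a * q ^ i) h
  rw [qPochhammerInf, split]
  simp only [qPochhammerInf, pow_zero, mul_one, mul_assoc, ← pow_succ']

lemma one_sub_norm_le_norm_one_sub_mul_pow (hq : ‖q‖ ≤ 1) (a : ℂ) (i : ℕ) :
    1 - ‖a‖ ≤ ‖1 - a * q ^ i‖ := by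
  have h := norm_sub_norm_le 1 (a * q ^ i)
  rw [norm_one, norm_mul, norm_pow] at h
  linarith [mul_le_of_le_one_right (norm_nonneg a) (pow_le_one₀ (norm_nonneg q) hq : ‖q‖ ^ i ≤ 1)]

lemma one_sub_mul_pow_ne_zero (hq : ‖q‖ ≤ 1) (ha : ‖a‖ < 1) (i : ℕ) : 1 - a * q ^ i ≠ 0 :=
  norm_pos_iff.1 <| (sub_pos.2 ha).trans_le (one_sub_norm_le_norm_one_sub_mul_pow hq a i)

lemma qPochhammer_ne_zero (hq : ‖q‖ ≤ 1) (ha : ‖a‖ < 1) (n : ℕ) : qPochhammer q a n ≠ 0 :=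
  prod_ne_zero_iff.2 fun i _ ↦ one_sub_mul_pow_ne_zero hq ha i

lemma qPochhammerInf_ne_zero (hq : ‖q‖ < 1) (ha : ‖a‖ < 1) : qPochhammerInf q a ≠ 0 := by
  simp only [qPochhammerInf, sub_eq_add_neg]
  refine tprod_one_add_ne_zero_of_summable (fun i ↦ ?_) (summable_norm_neg_mul_pow hq a)
  rw [← sub_eq_add_neg]
  exact one_sub_mul_pow_ne_zero hq.le ha i

lemma multipliableLocallyUniformlyOn_one_sub_mul_pow (hq : ‖q‖ < 1) (r : ℝ) :
    MultipliableLocallyUniformlyOn (fun (i : ℕ) a ↦ 1 - a * q ^ i) (Metric.ball 0 r) := by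
  simp only [sub_eq_add_neg]
  refine Summable.multipliableLocallyUniformlyOn_nat_one_add Metric.isOpen_ball
    ((summable_geometric_of_lt_one (norm_nonneg q) hq).mul_left r)
    (.of_forall fun i a ha ↦ ?_) fun i ↦ by fun_prop
  rw [norm_neg, norm_mul, norm_pow]
  gcongr
  exact (mem_ball_zero_iff.1 ha).le

lemma differentiable_qPochhammerInf (hq : ‖q‖ < 1) : Differentiable ℂ (qPochhammerInf q) := by
  intro a
  have h := (multipliableLocallyUniformlyOn_one_sub_mul_pow hq (‖a‖ + 1)).hasProdLocallyUniformlyOn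
  refine (h.differentiableOn (.of_forall fun s ↦ ?_) Metric.isOpen_ball).differentiableAt
    (Metric.isOpen_ball.mem_nhds (by simp))
  fun_prop

lemma logDeriv_one_sub_mul_const (c a : ℂ) : logDeriv (fun a ↦ 1 - a * c) a = -c / (1 - a * c) := by
  simp [logDeriv_apply]

theorem norm_logDeriv_qPochhammerInf_le (hq : ‖q‖ < 1) (ha : ‖a‖ < 1) :
    ‖logDeriv (qPochhammerInf q) a‖ ≤ (1 - ‖q‖)⁻¹ * (1 - ‖a‖)⁻¹ := by
  have bound (i : ℕ) : ‖logDeriv (fun a ↦ 1 - a * q ^ i) a‖ ≤ ‖q‖ ^ i * (1 - ‖a‖)⁻¹ := by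
    rw [logDeriv_one_sub_mul_const, norm_div, norm_neg, norm_pow, div_eq_mul_inv]
    have := one_sub_norm_le_norm_one_sub_mul_pow hq.le a i
    have := sub_pos.2 ha
    gcongr
  have sum := (hasSum_geometric_of_lt_one (norm_nonneg q) hq).mul_right (1 - ‖a‖)⁻¹
  have h := logDeriv_tprod_eq_tsum Metric.isOpen_ball (mem_ball_zero_iff.2 ha)
    (one_sub_mul_pow_ne_zero hq.le ha) (fun i ↦ by fun_prop) (.of_norm_bounded sum.summable bound)
    (multipliableLocallyUniformlyOn_one_sub_mul_pow hq 1) (qPochhammerInf_ne_zero hq ha)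
  change ‖logDeriv (fun a ↦ ∏' i : ℕ, (1 - a * q ^ i)) a‖ ≤ _
  rw [h]
  exact tsum_of_norm_bounded sum bound

end InfiniteProduct

section EulerProductBound

variable {s : ℝ}

lemma mul_pow_mul_one_sub_le (hs : 0 ≤ s) (hs1 : s ≤ 1) (m : ℕ) :
    m * s ^ m * (1 - s) ≤ 1 - s ^ m := by
  induction m with
  | zero => simp
  | succ m ih =>
    have h := mul_nonneg (sub_nonneg.2 hs1) (sub_nonneg.2 (pow_le_one₀ hs hs1 : s ^ (m + 1) ≤ 1))
    have := mul_le_mul_of_nonneg_left ih hs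
    push_cast
    rw [pow_succ] at h ⊢
    linarith

lemma sum_pow_succ_div_le (hs : 0 ≤ s) (hs1 : s < 1) (n m : ℕ) :
    ∑ i ∈ range n, (s ^ (i + 1)) ^ (m + 1) / (m + 1 : ℝ) ≤ 1 / (m + 1 : ℝ) ^ 2 * (1 - s)⁻¹ := by
  have ht : 0 ≤ s ^ (m + 1) := pow_nonneg hs _
  have ht1 : s ^ (m + 1) < 1 := pow_lt_one₀ hs hs1 m.succ_ne_zero
  have hgeom : ∑ i ∈ range n, (s ^ (m + 1)) ^ i ≤ (1 - s ^ (m + 1))⁻¹ :=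
    (summable_geometric_of_lt_one ht ht1).sum_le_tsum _ (fun i _ ↦ by positivity) |>.trans_eq
      (tsum_geometric_of_lt_one ht ht1)
  have hbern := mul_pow_mul_one_sub_le hs hs1.le (m + 1)
  push_cast at hbern
  have := sub_pos.2 hs1
  have := sub_pos.2 ht1
  calc ∑ i ∈ range n, (s ^ (i + 1)) ^ (m + 1) / (m + 1 : ℝ)
      = s ^ (m + 1) / (m + 1) * ∑ i ∈ range n, (s ^ (m + 1)) ^ i := by
        rw [mul_sum]
        exact sum_congr rfl fun i _ ↦ by ring
    _ ≤ s ^ (m + 1) / (m + 1) * (1 - s ^ (m + 1))⁻¹ := by gcongr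
    _ ≤ 1 / (m + 1 : ℝ) ^ 2 * (1 - s)⁻¹ := by
        rw [← div_eq_mul_inv, ← div_eq_mul_inv, div_div, div_div,
          div_le_div_iff₀ (by positivity) (by positivity)]
        nlinarith

theorem exp_neg_le_qPochhammer_self (hs : 0 ≤ s) (hs1 : s < 1) (n : ℕ) :
    Real.exp (-(Real.pi ^ 2 / 6 * (1 - s)⁻¹)) ≤ qPochhammer s s n := by
  have hpow (i : ℕ) : s * s ^ i < 1 := by
    rw [← pow_succ']
    exact pow_lt_one₀ hs hs1 i.succ_ne_zero
  have hpos (i : ℕ) : 0 < 1 - s * s ^ i := sub_pos.2 (hpow i)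
  have hlog : HasSum (fun m : ℕ ↦ ∑ i ∈ range n, (s * s ^ i) ^ (m + 1) / (m + 1 : ℝ))
      (∑ i ∈ range n, -Real.log (1 - s * s ^ i)) := by
    refine hasSum_sum fun i _ ↦ Real.hasSum_pow_div_log_of_abs_lt_one ?_
    rw [abs_of_nonneg (by positivity)]
    exact hpow i
  have hzeta : HasSum (fun m : ℕ ↦ 1 / (m + 1 : ℝ) ^ 2 * (1 - s)⁻¹)
      (Real.pi ^ 2 / 6 * (1 - s)⁻¹) := by
    have h := (hasSum_nat_add_iff' 1).2 hasSum_zeta_two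
    simp only [sum_range_one, Nat.cast_zero, Nat.cast_add, Nat.cast_one] at h
    simpa using h.mul_right (1 - s)⁻¹
  have hle := hasSum_le (fun m ↦ by
    simpa only [← pow_succ'] using sum_pow_succ_div_le hs hs1 n m) hlog hzeta
  rw [qPochhammer, ← Real.le_log_iff_exp_le (prod_pos fun i _ ↦ hpos i),
    Real.log_prod fun i _ ↦ (hpos i).ne']
  rw [sum_neg_distrib] at hle
  linarith

theorem exp_neg_le_norm_qPochhammerInf {q a : ℂ} (hs1 : s < 1) (hq : ‖q‖ ≤ s) (ha : ‖a‖ ≤ s) :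
    Real.exp (-(Real.pi ^ 2 / 6 * (1 - s)⁻¹)) ≤ ‖qPochhammerInf q a‖ := by
  have hs : 0 ≤ s := (norm_nonneg q).trans hq
  refine ge_of_tendsto' (tendsto_qPochhammer (hq.trans_lt hs1) a).norm fun n ↦ ?_
  refine (exp_neg_le_qPochhammer_self hs hs1 n).trans ?_
  rw [qPochhammer, qPochhammer, norm_prod]
  refine prod_le_prod (fun i _ ↦ ?_) fun i _ ↦ ?_
  · rw [← pow_succ']
    exact sub_nonneg.2 (pow_le_one₀ hs hs1.le)
  · have h : ‖a * q ^ i‖ ≤ s * s ^ i := by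
      rw [norm_mul, norm_pow]
      gcongr
    have := norm_sub_norm_le 1 (a * q ^ i)
    rw [norm_one] at this
    linarith

end EulerProductBound

section PartialTheta

variable {q : ℂ}

/-- The partial theta function `θ(q, x)`. -/
noncomputable def partialTheta (q x : ℂ) : ℂ := ∑' j : ℕ, q ^ (j * (j + 1) / 2) * x ^ j

lemma pow_triangle_succ_mul_pow_succ (q x : ℂ) (j : ℕ) :
    q ^ ((j + 1) * (j + 1 + 1) / 2) * x ^ (j + 1) =
      q ^ (j + 1) * x * (q ^ (j * (j + 1) / 2) * x ^ j) := by
  have h := Nat.triangle_succ (j + 1)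
  rw [Nat.add_sub_cancel, Nat.add_sub_cancel, mul_comm (j + 1) j, mul_comm (j + 1 + 1)] at h
  rw [h]
  ring

lemma summable_partialTheta (hq : ‖q‖ < 1) (x : ℂ) :
    Summable fun j : ℕ ↦ q ^ (j * (j + 1) / 2) * x ^ j := by
  have ratio : Tendsto (fun j ↦ ‖q ^ (j + 1) * x‖) atTop (𝓝 0) := by
    have h := (tendsto_add_atTop_iff_nat 1).2 (tendsto_pow_atTop_nhds_zero_of_norm_lt_one hq)
    simpa using (h.mul_const x).norm
  refine summable_of_ratio_norm_eventually_le one_half_lt_one ?_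
  filter_upwards [ratio.eventually_le_const one_half_pos] with j hj
  rw [pow_triangle_succ_mul_pow_succ, norm_mul]
  gcongr

lemma hasSum_partialTheta (hq : ‖q‖ < 1) (x : ℂ) :
    HasSum (fun j : ℕ ↦ q ^ (j * (j + 1) / 2) * x ^ j) (partialTheta q x) :=
  (summable_partialTheta hq x).hasSum

lemma partialTheta_eq_one_add (hq : ‖q‖ < 1) (x : ℂ) :
    partialTheta q x = 1 + q * x * partialTheta q (q * x) := by
  rw [partialTheta, (summable_partialTheta hq x).tsum_eq_zero_add, partialTheta, ← tsum_mul_left]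
  congr 1
  · simp
  · refine tsum_congr fun j ↦ ?_
    rw [pow_triangle_succ_mul_pow_succ]
    ring

lemma norm_pow_mul_pow_le (hq : ‖q‖ ≤ 1) {x : ℂ} {r : ℝ} (hx : ‖x‖ ≤ r) (m j : ℕ) :
    ‖q ^ m * x ^ j‖ ≤ r ^ j := by
  rw [norm_mul, norm_pow, norm_pow]
  exact mul_le_of_le_one_left (by positivity) (pow_le_one₀ (norm_nonneg q) hq) |>.trans (by gcongr)

lemma norm_partialTheta_le_two (hq : ‖q‖ ≤ 1) {x : ℂ} (hx : ‖x‖ ≤ 1 / 2) :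
    ‖partialTheta q x‖ ≤ 2 :=
  tsum_of_norm_bounded hasSum_geometric_two fun _ ↦ norm_pow_mul_pow_le hq hx _ _

theorem partialTheta_ne_zero (hq : ‖q‖ < 1) {x : ℂ} (hx : ‖q * x‖ < 1 / 2) :
    partialTheta q x ≠ 0 := by
  intro h
  rw [partialTheta_eq_one_add hq, add_eq_zero_iff_neg_eq] at h
  have h' := congrArg norm h
  rw [norm_neg, norm_one, norm_mul] at h'
  nlinarith [norm_partialTheta_le_two hq.le hx.le, norm_nonneg (q * x)]

lemma differentiable_partialTheta (hq : ‖q‖ < 1) : Differentiable ℂ (partialTheta q) := by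
  intro x
  have h := Complex.differentiableOn_tsum_of_summable_norm
    (F := fun (j : ℕ) (x : ℂ) ↦ q ^ (j * (j + 1) / 2) * x ^ j)
    (summable_partialTheta hq ((‖x‖ + 1 : ℝ) : ℂ)).norm (fun j ↦ by fun_prop)
    (Metric.isOpen_ball (x := 0) (ε := ‖x‖ + 1)) fun j y hy ↦ ?_
  · exact h.differentiableAt (Metric.isOpen_ball.mem_nhds (by simp))
  · rw [norm_mul, norm_mul, norm_pow y, norm_pow (_ : ℂ) j, Complex.norm_real]
    gcongr
    exact (mem_ball_zero_iff.1 hy).le.trans (le_abs_self _)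

lemma norm_deriv_partialTheta_le (hq : ‖q‖ < 1) {x : ℂ} (hx : ‖x‖ ≤ 1 / 4) :
    ‖deriv (partialTheta q) x‖ ≤ 8 := by
  have h := Complex.norm_deriv_le_of_forall_mem_sphere_norm_le (c := x) (C := 2)
    (by norm_num : (0 : ℝ) < 1 / 4) (differentiable_partialTheta hq).diffContOnCl fun z hz ↦ ?_
  · norm_num at h
    exact h
  · have := norm_le_norm_add_norm_sub' z x
    rw [← dist_eq_norm_sub, Metric.mem_sphere.1 hz] at this
    exact norm_partialTheta_le_two hq.le (by linarith)

end PartialTheta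

section BilateralTheta

variable {q x : ℂ}

/-- The two-sided theta series `∑ q ^ (n (n + 1) / 2) x ^ n` over all integers `n`, which the
partial theta function truncates. -/
noncomputable def bilateralTheta (q x : ℂ) : ℂ := ∑' n : ℤ, thetaTerm q x n

lemma hasSum_thetaTerm (hq : ‖q‖ < 1) (x : ℂ) :
    HasSum (thetaTerm q x) (partialTheta q x + x⁻¹ * partialTheta q x⁻¹) := by
  refine HasSum.of_nat_of_neg_add_one ?_ ?_
  · simpa only [thetaTerm_natCast] using hasSum_partialTheta hq x
  · simpa only [thetaTerm_neg_natCast_add_one] using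
      (hasSum_partialTheta hq x⁻¹).mul_left x⁻¹

lemma bilateralTheta_eq (hq : ‖q‖ < 1) (x : ℂ) :
    bilateralTheta q x = partialTheta q x + x⁻¹ * partialTheta q x⁻¹ :=
  (hasSum_thetaTerm hq x).tsum_eq

lemma bilateralTheta_eq_thetaTerm_mul (hq0 : q ≠ 0) (hx : x ≠ 0) (k : ℤ) :
    bilateralTheta q x = thetaTerm q x k * bilateralTheta q (x * q ^ k) := by
  rw [bilateralTheta, bilateralTheta, ← tsum_mul_left, ← (Equiv.addRight k).tsum_eq]
  exact tsum_congr fun n ↦ thetaTerm_add hq0 hx n k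

/-- The coefficient `(q; q)_n [2 n choose n + j]_q` of `thetaTerm q x j` in the `n`-th finite triple
product, for `-n ≤ j ≤ n`; at other `j` the truncation `Int.toNat` makes the value meaningless. -/
noncomputable def tripleProductCoeff (q : ℂ) (n : ℕ) (j : ℤ) : ℂ :=
  qPochhammer q q n * qPochhammer q q (2 * n) *
    ((qPochhammer q q (n + j).toNat)⁻¹ * (qPochhammer q q (n - j).toNat)⁻¹)

lemma tendsto_tripleProductCoeff (hq : ‖q‖ < 1) (j : ℤ) :
    Tendsto (fun n ↦ tripleProductCoeff q n j) atTop (𝓝 1) := by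
  have hlim := tendsto_qPochhammer hq q
  have hne := qPochhammerInf_ne_zero hq hq
  have hadd : Tendsto (fun n : ℕ ↦ (n + j).toNat) atTop atTop :=
    tendsto_atTop_atTop.2 fun b ↦ ⟨b + j.natAbs, fun n hn ↦ by omega⟩
  have hsub : Tendsto (fun n : ℕ ↦ (n - j).toNat) atTop atTop :=
    tendsto_atTop_atTop.2 fun b ↦ ⟨b + j.natAbs, fun n hn ↦ by omega⟩
  have hdouble : Tendsto (fun n : ℕ ↦ 2 * n) atTop atTop := tendsto_id.const_mul_atTop' two_pos
  have h := (hlim.mul (hlim.comp hdouble)).mul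
    (((hlim.comp hadd).inv₀ hne).mul ((hlim.comp hsub).inv₀ hne))
  rwa [← mul_inv, mul_inv_cancel₀ (mul_ne_zero hne hne)] at h

lemma exists_norm_tripleProductCoeff_le (hq : ‖q‖ < 1) :
    ∃ C, ∀ n j, ‖tripleProductCoeff q n j‖ ≤ C := by
  have hlim := tendsto_qPochhammer hq q
  obtain ⟨A, hA⟩ := (Metric.isBounded_range_of_tendsto _ hlim).exists_norm_le
  obtain ⟨B, hB⟩ := (Metric.isBounded_range_of_tendsto _
    (hlim.inv₀ (qPochhammerInf_ne_zero hq hq))).exists_norm_le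
  rw [Set.forall_mem_range] at hA hB
  refine ⟨A * A * (B * B), fun n j ↦ ?_⟩
  rw [tripleProductCoeff, norm_mul, norm_mul, norm_mul]
  have hA0 := (norm_nonneg _).trans (hA 0)
  have hB0 := (norm_nonneg _).trans (hB 0)
  gcongr
  exacts [hA _, hA _, hB _, hB _]

lemma qPochhammer_mul_gaussBinom_eq_tripleProductCoeff (hq : ‖q‖ < 1) {n k : ℕ} (hk : k ≤ 2 * n) :
    qPochhammer q q n * gaussBinom q (n + n) k = tripleProductCoeff q n (k - n) := by
  have h := gaussBinom_add_mul_qPochhammer q k (2 * n - k)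
  rw [Nat.add_sub_of_le hk, two_mul] at h
  have := qPochhammer_ne_zero hq.le hq k
  have := qPochhammer_ne_zero hq.le hq (n + n - k)
  rw [tripleProductCoeff, show ((n : ℤ) + (k - n)).toNat = k by omega,
    show ((n : ℤ) - (k - n)).toNat = n + n - k by omega, two_mul, ← h]
  field_simp

lemma qPochhammer_mul_tripleProduct_eq_sum (hq : ‖q‖ < 1) (hq0 : q ≠ 0) (hx : x ≠ 0) (n : ℕ) :
    qPochhammer q q n * (qPochhammer q (-(x * q)) n * qPochhammer q (-x⁻¹) n) =
      ∑ j ∈ Icc (-n : ℤ) n, tripleProductCoeff q n j * thetaTerm q x j := by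
  rw [qPochhammer_mul_qPochhammer_eq_sum_thetaTerm hq0 hx, mul_sum]
  refine sum_nbij' (fun k ↦ (k : ℤ) - n) (fun j ↦ (j + n).toNat) ?_ ?_ ?_ ?_ fun k hk ↦ ?_
  · intro k hk
    rw [mem_range] at hk
    rw [mem_Icc]
    omega
  · intro j hj
    rw [mem_Icc] at hj
    rw [mem_range]
    omega
  · intro k _
    simp
  · intro j hj
    rw [mem_Icc] at hj
    omega
  · rw [mem_range] at hk
    rw [← mul_assoc, qPochhammer_mul_gaussBinom_eq_tripleProductCoeff hq (by omega)]

theorem bilateralTheta_eq_qPochhammerInf_mul (hq : ‖q‖ < 1) (hq0 : q ≠ 0) (hx : x ≠ 0) :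
    bilateralTheta q x =
      qPochhammerInf q q * (qPochhammerInf q (-(x * q)) * qPochhammerInf q (-x⁻¹)) := by
  obtain ⟨C, hC⟩ := exists_norm_tripleProductCoeff_le hq
  have hsum := (hasSum_thetaTerm hq x).summable
  have product := (tendsto_qPochhammer hq q).mul
    ((tendsto_qPochhammer hq (-(x * q))).mul (tendsto_qPochhammer hq (-x⁻¹)))
  refine tendsto_nhds_unique (Tendsto.congr (fun n ↦ ?_) <|
    tendsto_tsum_of_dominated_convergence (bound := fun j ↦ C * ‖thetaTerm q x j‖)
      (f := fun n : ℕ ↦ Set.indicator (Icc (-n : ℤ) n) fun j ↦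
        tripleProductCoeff q n j * thetaTerm q x j)
      (hsum.norm.mul_left C) (fun j ↦ ?_) (.of_forall fun n j ↦ ?_)) product
  · rw [qPochhammer_mul_tripleProduct_eq_sum hq hq0 hx, sum_eq_tsum_indicator]
  · have h := (tendsto_tripleProductCoeff hq j).mul_const (thetaTerm q x j)
    rw [one_mul] at h
    refine h.congr' ?_
    filter_upwards [eventually_ge_atTop j.natAbs] with n hn
    rw [Set.indicator_of_mem]
    rw [mem_coe, mem_Icc]
    omega
  · refine (norm_indicator_le_norm_self _ j).trans ?_
    rw [norm_mul]
    gcongr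
    exact hC n j

end BilateralTheta

section ThetaDerivative

variable {q x : ℂ}

lemma hasDerivAt_bilateralTheta (hq : ‖q‖ < 1) (hx : x ≠ 0) :
    HasDerivAt (bilateralTheta q) (deriv (partialTheta q) x - (x ^ 2)⁻¹ *
      (partialTheta q x⁻¹ + x⁻¹ * deriv (partialTheta q) x⁻¹)) x := by
  rw [funext (bilateralTheta_eq hq)]
  have h (y : ℂ) := (differentiable_partialTheta hq y).hasDerivAt
  have hinv := hasDerivAt_inv hx
  convert! (h x).add (hinv.mul ((h x⁻¹).comp x hinv)) using 1
  simp only [Function.comp_apply]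
  ring

lemma mul_deriv_bilateralTheta (hq : ‖q‖ < 1) (hq0 : q ≠ 0) (hx : x ≠ 0) (k : ℤ) :
    x * deriv (bilateralTheta q) x = k * bilateralTheta q x +
      thetaTerm q x k * (x * q ^ k * deriv (bilateralTheta q) (x * q ^ k)) := by
  have hy : x * q ^ k ≠ 0 := mul_ne_zero hx (zpow_ne_zero k hq0)
  have hterm : HasDerivAt (thetaTerm q · k) (q ^ (k * (k + 1) / 2) * (k * x ^ (k - 1))) x :=
    (hasDerivAt_zpow k x (.inl hx)).const_mul _
  have hshift : HasDerivAt (fun x ↦ bilateralTheta q (x * q ^ k))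
      (deriv (bilateralTheta q) (x * q ^ k) * (1 * q ^ k)) x :=
    (hasDerivAt_bilateralTheta hq hy).differentiableAt.hasDerivAt.comp (h := (· * q ^ k)) x
      ((hasDerivAt_id x).mul_const _)
  have hderiv := (hterm.mul hshift).congr_of_eventuallyEq <|
    (eventually_ne_nhds hx).mono fun z hz ↦ bilateralTheta_eq_thetaTerm_mul hq0 hz k
  rw [hderiv.deriv, bilateralTheta_eq_thetaTerm_mul hq0 hx k, thetaTerm, zpow_sub_one₀ hx]
  field_simp

lemma norm_bilateralTheta_le_of_eq_zero (hq : ‖q‖ < 1) (hx : 2 ≤ ‖x‖) (h : partialTheta q x = 0) :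
    ‖bilateralTheta q x‖ ≤ 2 / ‖x‖ := by
  have hinv : ‖x⁻¹‖ ≤ 1 / 2 := by
    rw [norm_inv, one_div]
    gcongr
  rw [bilateralTheta_eq hq, h, zero_add, norm_mul, norm_inv, ← div_eq_inv_mul]
  gcongr
  exact norm_partialTheta_le_two hq.le hinv

lemma norm_mul_deriv_bilateralTheta_le_of_deriv_eq_zero (hq : ‖q‖ < 1) (hx : 8 ≤ ‖x‖)
    (h : deriv (partialTheta q) x = 0) : ‖x * deriv (bilateralTheta q) x‖ ≤ 3 / ‖x‖ := by
  have hx0 : x ≠ 0 := norm_pos_iff.1 (by linarith)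
  have hinv : ‖x⁻¹‖ ≤ 1 / 8 := by
    rw [norm_inv, one_div]
    gcongr
  have hθ : ‖partialTheta q x⁻¹‖ ≤ 2 := norm_partialTheta_le_two hq.le (by linarith)
  have hθ' : ‖deriv (partialTheta q) x⁻¹‖ ≤ 8 := norm_deriv_partialTheta_le hq (by linarith)
  rw [(hasDerivAt_bilateralTheta hq hx0).deriv, h, zero_sub, div_eq_inv_mul, ← norm_inv]
  calc ‖x * -((x ^ 2)⁻¹ * (partialTheta q x⁻¹ + x⁻¹ * deriv (partialTheta q) x⁻¹))‖
      = ‖x⁻¹‖ * ‖partialTheta q x⁻¹ + x⁻¹ * deriv (partialTheta q) x⁻¹‖ := by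
        rw [mul_neg, norm_neg, ← mul_assoc, ← norm_mul]
        congr 2
        field_simp
    _ ≤ ‖x⁻¹‖ * (2 + 1 / 8 * 8) := by
        gcongr
        refine (norm_add_le _ _).trans ?_
        rw [norm_mul]
        gcongr
    _ = ‖x⁻¹‖ * 3 := by norm_num

end ThetaDerivative

section Annulus

variable {q y : ℂ} {s : ℝ}

/-- The Jacobi triple product deprived of the factor `1 + y⁻¹`, its only one that can vanish for
`‖q‖ < ‖y‖ < ‖q‖⁻¹`. -/
noncomputable def thetaCofactor (q y : ℂ) : ℂ :=
  qPochhammerInf q q * (qPochhammerInf q (-(y * q)) * qPochhammerInf q (-(y⁻¹ * q)))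

lemma bilateralTheta_eq_one_add_inv_mul (hq : ‖q‖ < 1) (hq0 : q ≠ 0) (hy : y ≠ 0) :
    bilateralTheta q y = (1 + y⁻¹) * thetaCofactor q y := by
  rw [bilateralTheta_eq_qPochhammerInf_mul hq hq0 hy, qPochhammerInf_eq_one_sub_mul hq (-y⁻¹),
    thetaCofactor, neg_mul]
  ring

lemma exp_neg_le_norm_thetaCofactor (hs : s < 1) (hq : ‖q‖ ≤ s) (hyq : ‖y * q‖ ≤ s)
    (hyq' : ‖y⁻¹ * q‖ ≤ s) : Real.exp (-(5 * (1 - s)⁻¹)) ≤ ‖thetaCofactor q y‖ := by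
  have hpi : Real.pi ^ 2 ≤ 10 := by nlinarith [Real.pi_lt_d2, Real.pi_pos]
  have := sub_pos.2 hs
  calc Real.exp (-(5 * (1 - s)⁻¹)) = Real.exp (-(10 / 6 * (1 - s)⁻¹)) ^ 3 := by
        rw [← Real.exp_nat_mul]
        ring_nf
    _ ≤ Real.exp (-(Real.pi ^ 2 / 6 * (1 - s)⁻¹)) ^ 3 := by gcongr
    _ ≤ ‖qPochhammerInf q q‖ *
        (‖qPochhammerInf q (-(y * q))‖ * ‖qPochhammerInf q (-(y⁻¹ * q))‖) := by
      have bound {a : ℂ} (ha : ‖a‖ ≤ s) := exp_neg_le_norm_qPochhammerInf hs hq ha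
      rw [pow_succ', sq (Real.exp _)]
      gcongr
      exacts [bound hq, bound (by rwa [norm_neg]), bound (by rwa [norm_neg])]
    _ = ‖thetaCofactor q y‖ := by rw [thetaCofactor, norm_mul, norm_mul]

lemma norm_mul_logDeriv_qPochhammerInf_le {a : ℂ} (hs : s < 1) (hq : ‖q‖ ≤ s) (ha : ‖a‖ ≤ s) :
    ‖a * logDeriv (qPochhammerInf q) a‖ ≤ (1 - s)⁻¹ ^ 2 := by
  have := sub_pos.2 hs
  have := sub_pos.2 (ha.trans_lt hs)
  rw [norm_mul]
  calc ‖a‖ * ‖logDeriv (qPochhammerInf q) a‖ ≤ 1 * ((1 - ‖q‖)⁻¹ * (1 - ‖a‖)⁻¹) := by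
        gcongr
        · exact ha.trans hs.le
        · exact norm_logDeriv_qPochhammerInf_le (hq.trans_lt hs) (ha.trans_lt hs)
    _ ≤ 1 * ((1 - s)⁻¹ * (1 - s)⁻¹) := by gcongr
    _ = (1 - s)⁻¹ ^ 2 := by ring

lemma logDeriv_qPochhammerInf_comp {g : ℂ → ℂ} {g' : ℂ} (hq : ‖q‖ < 1) (hg : HasDerivAt g g' y) :
    logDeriv (fun y ↦ qPochhammerInf q (g y)) y = logDeriv (qPochhammerInf q) (g y) * g' := by
  rw [← hg.deriv]
  exact logDeriv_comp (differentiable_qPochhammerInf hq _) hg.differentiableAt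

lemma mul_logDeriv_thetaCofactor (hq : ‖q‖ < 1) (hy : y ≠ 0) (hyq : ‖y * q‖ < 1)
    (hyq' : ‖y⁻¹ * q‖ < 1) :
    y * logDeriv (thetaCofactor q) y =
      -(y * q) * logDeriv (qPochhammerInf q) (-(y * q)) -
        -(y⁻¹ * q) * logDeriv (qPochhammerInf q) (-(y⁻¹ * q)) := by
  have hdiff := differentiable_qPochhammerInf hq
  have hf : HasDerivAt (fun y ↦ -(y * q)) (-(1 * q)) y := ((hasDerivAt_id y).mul_const q).neg
  have hg : HasDerivAt (fun y ↦ -(y⁻¹ * q)) (-(-(y ^ 2)⁻¹ * q)) y :=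
    ((hasDerivAt_inv hy).mul_const q).neg
  have hmul := logDeriv_mul (f := fun y ↦ qPochhammerInf q (-(y * q)))
    (g := fun y ↦ qPochhammerInf q (-(y⁻¹ * q))) y
    (qPochhammerInf_ne_zero hq ((norm_neg _).trans_lt hyq))
    (qPochhammerInf_ne_zero hq ((norm_neg _).trans_lt hyq'))
    (by fun_prop) (by fun_prop (disch := assumption))
  unfold thetaCofactor
  rw [logDeriv_const_mul y _ (qPochhammerInf_ne_zero hq hq), hmul,
    logDeriv_qPochhammerInf_comp hq hf, logDeriv_qPochhammerInf_comp hq hg]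
  field_simp
  ring

lemma differentiableAt_thetaCofactor (hq : ‖q‖ < 1) (hy : y ≠ 0) :
    DifferentiableAt ℂ (thetaCofactor q) y := by
  have hdiff := differentiable_qPochhammerInf hq
  unfold thetaCofactor
  fun_prop (disch := assumption)

theorem norm_inv_mul_exp_neg_le (hs : s < 1) (hq : ‖q‖ ≤ s) (hq0 : q ≠ 0) (hy : y ≠ 0)
    (hyq : ‖y * q‖ ≤ s) (hyq' : ‖y⁻¹ * q‖ ≤ s) :
    ‖y⁻¹‖ * Real.exp (-(5 * (1 - s)⁻¹)) ≤
      ‖y * deriv (bilateralTheta q) y‖ + 2 * (1 - s)⁻¹ ^ 2 * ‖bilateralTheta q y‖ := by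
  have hq1 := hq.trans_lt hs
  have hlower := exp_neg_le_norm_thetaCofactor hs hq hyq hyq'
  have hH0 : thetaCofactor q y ≠ 0 := norm_pos_iff.1 ((Real.exp_pos _).trans_le hlower)
  have hlog : ‖y * logDeriv (thetaCofactor q) y‖ ≤ 2 * (1 - s)⁻¹ ^ 2 := by
    rw [mul_logDeriv_thetaCofactor hq1 hy (hyq.trans_lt hs) (hyq'.trans_lt hs), two_mul]
    refine (norm_sub_le _ _).trans (add_le_add ?_ ?_) <;>
      exact norm_mul_logDeriv_qPochhammerInf_le hs hq (by rwa [norm_neg])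
  have hderiv : HasDerivAt (bilateralTheta q)
      (-(y ^ 2)⁻¹ * thetaCofactor q y + (1 + y⁻¹) * deriv (thetaCofactor q) y) y :=
    (((hasDerivAt_inv hy).const_add 1).mul
      (differentiableAt_thetaCofactor hq1 hy).hasDerivAt).congr_of_eventuallyEq <|
      (eventually_ne_nhds hy).mono fun z hz ↦ bilateralTheta_eq_one_add_inv_mul hq1 hq0 hz
  have identity : y⁻¹ * thetaCofactor q y =
      y * logDeriv (thetaCofactor q) y * bilateralTheta q y -
        y * deriv (bilateralTheta q) y := by
    rw [hderiv.deriv, bilateralTheta_eq_one_add_inv_mul hq1 hq0 hy, logDeriv_apply]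
    field_simp
    ring
  calc ‖y⁻¹‖ * Real.exp (-(5 * (1 - s)⁻¹)) ≤ ‖y⁻¹‖ * ‖thetaCofactor q y‖ := by gcongr
    _ ≤ ‖y * logDeriv (thetaCofactor q) y‖ * ‖bilateralTheta q y‖ +
        ‖y * deriv (bilateralTheta q) y‖ := by
      rw [← norm_mul, identity, ← norm_mul]
      exact norm_sub_le _ _
    _ ≤ ‖y * deriv (bilateralTheta q) y‖ + 2 * (1 - s)⁻¹ ^ 2 * ‖bilateralTheta q y‖ := by
      rw [add_comm]
      gcongr

/-- Quasi-periodicity reduces this to `norm_inv_mul_exp_neg_le` at `y = x * q ^ (n + 1)`. -/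
theorem norm_thetaTerm_mul_exp_neg_le {x : ℂ} {n : ℤ} (hs : s < 1) (hq : ‖q‖ ≤ s) (hq0 : q ≠ 0)
    (hx : x ≠ 0) (hlo : ‖(x * q ^ n)⁻¹‖ ≤ s) (hhi : ‖x * q ^ (n + 2)‖ ≤ s) :
    ‖thetaTerm q x n‖ * Real.exp (-(5 * (1 - s)⁻¹)) ≤
      ‖x * deriv (bilateralTheta q) x‖ +
        (|(n + 1 : ℝ)| + 2 * (1 - s)⁻¹ ^ 2) * ‖bilateralTheta q x‖ := by
  set y := x * q ^ (n + 1) with y_def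
  have hy : y ≠ 0 := mul_ne_zero hx (zpow_ne_zero _ hq0)
  have hyq : y * q = x * q ^ (n + 2) := by
    rw [y_def, mul_assoc, ← zpow_add_one₀ hq0]
    ring_nf
  have hyq' : y⁻¹ * q = (x * q ^ n)⁻¹ := by
    rw [y_def, zpow_add_one₀ hq0]
    field_simp
  have annulus := norm_inv_mul_exp_neg_le hs hq hq0 hy (hyq ▸ hhi) (hyq' ▸ hlo)
  have hterm : ‖thetaTerm q x n‖ = ‖thetaTerm q x (n + 1)‖ * ‖y⁻¹‖ := by
    rw [thetaTerm_add_one hq0 hx, ← norm_mul, mul_inv_cancel_right₀ hy]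
  have hΘ : ‖thetaTerm q x (n + 1)‖ * ‖bilateralTheta q y‖ = ‖bilateralTheta q x‖ := by
    rw [bilateralTheta_eq_thetaTerm_mul hq0 hx (n + 1), norm_mul]
  have hΘ' : ‖thetaTerm q x (n + 1)‖ * ‖y * deriv (bilateralTheta q) y‖ ≤
      ‖x * deriv (bilateralTheta q) x‖ + |(n + 1 : ℝ)| * ‖bilateralTheta q x‖ := by
    have h := mul_deriv_bilateralTheta (hq.trans_lt hs) hq0 hx (n + 1)
    have hcast : |(n + 1 : ℝ)| = ‖((n + 1 : ℤ) : ℂ)‖ := by rw [Complex.norm_intCast]; push_cast; rfl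
    rw [← norm_mul, ← sub_eq_of_eq_add' h, hcast, ← norm_mul]
    exact norm_sub_le _ _
  calc ‖thetaTerm q x n‖ * Real.exp (-(5 * (1 - s)⁻¹))
      ≤ ‖thetaTerm q x (n + 1)‖ * (‖y * deriv (bilateralTheta q) y‖ +
          2 * (1 - s)⁻¹ ^ 2 * ‖bilateralTheta q y‖) := by
        rw [hterm, mul_assoc]
        gcongr
    _ = ‖thetaTerm q x (n + 1)‖ * ‖y * deriv (bilateralTheta q) y‖ +
          2 * (1 - s)⁻¹ ^ 2 * ‖bilateralTheta q x‖ := by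
        rw [← hΘ]
        ring
    _ ≤ ‖x * deriv (bilateralTheta q) x‖ + |(n + 1 : ℝ)| * ‖bilateralTheta q x‖ +
          2 * (1 - s)⁻¹ ^ 2 * ‖bilateralTheta q x‖ := by gcongr
    _ = _ := by ring

end Annulus

section Numerics

variable {s : ℝ} {K : ℕ}

lemma exp_ten_le : Real.exp 10 ≤ 2 ^ 15 := by
  calc Real.exp 10 = Real.exp 1 ^ 10 := by rw [← Real.exp_nat_mul]; norm_num
    _ ≤ 2.72 ^ 10 := by gcongr; linarith [Real.exp_one_lt_d9]
    _ ≤ 2 ^ 15 := by norm_num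

lemma weight_mul_exp_le_of_le_half (hs0 : 0 < s) (hs : s ≤ 1 / 2) :
    (2 * K + 5 + 4 * (1 - s)⁻¹ ^ 2) * Real.exp (5 * (1 - s)⁻¹) ≤ 8 ^ 11 * s⁻¹ ^ K ^ 2 := by
  have hv0 : 0 ≤ (1 - s)⁻¹ := inv_nonneg.2 (by linarith)
  have hv : (1 - s)⁻¹ ≤ 2 := inv_le_of_inv_le₀ two_pos (by linarith)
  have hexp : Real.exp (5 * (1 - s)⁻¹) ≤ 2 ^ 15 :=
    (Real.exp_le_exp.2 (by linarith)).trans exp_ten_le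
  have hs2 : 2 ≤ s⁻¹ := (le_inv_comm₀ two_pos hs0).2 (by linarith)
  have hpow : (K + 1 : ℝ) ≤ s⁻¹ ^ K ^ 2 := by
    calc (K + 1 : ℝ) ≤ 2 ^ K := mod_cast Nat.lt_two_pow_self
      _ ≤ 2 ^ K ^ 2 := pow_le_pow_right₀ one_le_two (Nat.le_self_pow two_ne_zero K)
      _ ≤ s⁻¹ ^ K ^ 2 := by gcongr
  calc (2 * K + 5 + 4 * (1 - s)⁻¹ ^ 2 : ℝ) * Real.exp (5 * (1 - s)⁻¹)
      ≤ (2 * K + 5 + 4 * 2 ^ 2 : ℝ) * 2 ^ 15 := by gcongr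
    _ ≤ 8 ^ 11 * (K + 1 : ℝ) := by linarith [(Nat.cast_nonneg K : (0 : ℝ) ≤ K)]
    _ ≤ 8 ^ 11 * s⁻¹ ^ K ^ 2 := by gcongr

/-- The smallness of `s ^ (2 * K + 3)` forces `s⁻¹ ^ K` above `exp 10`, whence `5 / (1 - s) ≤ K`. -/
lemma weight_mul_exp_le_of_half_le (hs : 1 / 2 ≤ s) (hs1 : s < 1)
    (hK : 8 ^ 11 * s ^ (2 * K + 3) ≤ 1) :
    (2 * K + 5 + 4 * (1 - s)⁻¹ ^ 2) * Real.exp (5 * (1 - s)⁻¹) ≤ 8 ^ 11 * s⁻¹ ^ K ^ 2 := by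
  have hs0 : 0 < s := by linarith
  have hpow : s ^ K ≤ (2 ^ 15)⁻¹ := by
    refine le_of_sq_le_sq ?_ (by positivity)
    have hcube : (1 / 2) ^ 3 ≤ s ^ 3 := by gcongr
    have hsplit : s ^ (2 * K + 3) = (s ^ K) ^ 2 * s ^ 3 := by ring
    rw [hsplit] at hK
    nlinarith [sq_nonneg (s ^ K)]
  have hexp : Real.exp 10 ≤ s⁻¹ ^ K := by
    rw [inv_pow]
    exact exp_ten_le.trans ((le_inv_comm₀ (by positivity) (by positivity)).1 hpow)
  have hlog : 10 ≤ K * Real.log s⁻¹ := by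
    rw [← Real.log_pow]
    exact (Real.le_log_iff_exp_le (by positivity)).2 hexp
  have hv : 5 * (1 - s)⁻¹ ≤ K := by
    have hlog_le : Real.log s⁻¹ ≤ 2 * (1 - s) := by
      have : s⁻¹ ≤ 2 := inv_le_of_inv_le₀ two_pos (by linarith)
      have : s⁻¹ * s = 1 := inv_mul_cancel₀ hs0.ne'
      nlinarith [Real.log_le_sub_one_of_pos (inv_pos.2 hs0)]
    rw [← div_eq_mul_inv, div_le_iff₀ (by linarith)]
    nlinarith [(Nat.cast_nonneg K : (0 : ℝ) ≤ K)]
  have hv0 : 0 ≤ (1 - s)⁻¹ := inv_nonneg.2 (by linarith)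
  have hquad : (2 * K + 5 + 4 * (1 - s)⁻¹ ^ 2 : ℝ) ≤ 8 ^ 11 * Real.exp K := by
    nlinarith [Real.quadratic_le_exp_of_nonneg (Nat.cast_nonneg (α := ℝ) K)]
  calc (2 * K + 5 + 4 * (1 - s)⁻¹ ^ 2 : ℝ) * Real.exp (5 * (1 - s)⁻¹)
      ≤ 8 ^ 11 * Real.exp K * Real.exp K := by gcongr
    _ = 8 ^ 11 * Real.exp (K * 2) := by rw [mul_assoc, ← Real.exp_add, mul_two]
    _ ≤ 8 ^ 11 * Real.exp (K * 10) := by gcongr; norm_num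
    _ = 8 ^ 11 * Real.exp 10 ^ K := by rw [Real.exp_nat_mul]
    _ ≤ 8 ^ 11 * (s⁻¹ ^ K) ^ K := by gcongr
    _ = 8 ^ 11 * s⁻¹ ^ K ^ 2 := by rw [← pow_mul, sq]

lemma weight_mul_exp_le (hs0 : 0 < s) (hs1 : s < 1) (hK : 8 ^ 11 * s ^ (2 * K + 3) ≤ 1) :
    (2 * K + 5 + 4 * (1 - s)⁻¹ ^ 2) * Real.exp (5 * (1 - s)⁻¹) ≤ 8 ^ 11 * s⁻¹ ^ K ^ 2 :=
  (le_total s (1 / 2)).elim (weight_mul_exp_le_of_le_half hs0)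
    fun hs ↦ weight_mul_exp_le_of_half_le hs hs1 hK

end Numerics

section MultipleZero

variable {q x : ℂ} {s : ℝ}

lemma exists_one_le_mul_pow_and_mul_pow_lt_one {X : ℝ} (hs0 : 0 < s) (hs1 : s < 1)
    (hX : 1 ≤ X * s) : ∃ n : ℕ, 1 ≤ X * s ^ (2 * n + 1) ∧ X * s ^ (2 * n + 3) < 1 := by
  have hXs : 0 < X * s := one_pos.trans_le hX
  obtain ⟨n, hlt, hle⟩ := exists_nat_pow_near_of_lt_one (inv_pos.2 hXs) (inv_le_one_of_one_le₀ hX)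
    (pow_pos hs0 2) (pow_lt_one₀ hs0.le hs1 two_ne_zero)
  rw [← one_div, lt_div_iff₀ hXs] at hlt
  rw [inv_le_iff_one_le_mul₀' hXs] at hle
  exact ⟨n, hle.trans_eq (by ring), lt_of_eq_of_lt (by ring) hlt⟩

lemma inv_pow_sq_le_norm_thetaTerm {n : ℕ} (hs : 0 < s) (hq : ‖q‖ = s ^ 2)
    (h : 1 ≤ ‖x‖ * s ^ (2 * n + 1)) : s⁻¹ ^ n ^ 2 ≤ ‖thetaTerm q x n‖ := by
  have heven : 2 * (n * (n + 1) / 2) = n * (n + 1) :=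
    Nat.two_mul_div_two_of_even (Nat.even_mul_succ_self n)
  rw [thetaTerm_natCast, norm_mul, norm_pow, norm_pow, hq, ← pow_mul, heven, inv_pow,
    inv_le_iff_one_le_mul₀ (by positivity)]
  calc 1 ≤ (‖x‖ * s ^ (2 * n + 1)) ^ n := one_le_pow₀ h
    _ = s ^ (n * (n + 1)) * ‖x‖ ^ n * s ^ n ^ 2 := by ring

lemma inv_pow_sq_mul_exp_neg_le {n : ℕ} (hs0 : 0 < s) (hs1 : s < 1) (hq : ‖q‖ = s ^ 2)
    (hlo : 1 ≤ ‖x‖ * s ^ (2 * n + 1)) (hhi : ‖x‖ * s ^ (2 * n + 3) ≤ 1) :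
    s⁻¹ ^ n ^ 2 * Real.exp (-(5 * (1 - s)⁻¹)) ≤ ‖x * deriv (bilateralTheta q) x‖ +
      (n + 1 + 2 * (1 - s)⁻¹ ^ 2) * ‖bilateralTheta q x‖ := by
  have hq0 : q ≠ 0 := norm_pos_iff.1 (hq ▸ pow_pos hs0 2)
  have hqs : ‖q‖ ≤ s := hq.trans_le (pow_le_of_le_one hs0.le hs1.le two_ne_zero)
  have hx : x ≠ 0 := by
    rintro rfl
    norm_num at hlo
  have hinner : ‖(x * q ^ (n : ℤ))⁻¹‖ ≤ s := by
    rw [zpow_natCast, norm_inv, norm_mul, norm_pow, hq, inv_le_iff_one_le_mul₀ (by positivity)]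
    exact hlo.trans_eq (by ring)
  have houter : ‖x * q ^ ((n : ℤ) + 2)‖ ≤ s := by
    rw [show (n : ℤ) + 2 = (n + 2 : ℕ) by push_cast; rfl, zpow_natCast, norm_mul, norm_pow, hq]
    calc ‖x‖ * (s ^ 2) ^ (n + 2) = ‖x‖ * s ^ (2 * n + 3) * s := by ring
      _ ≤ 1 * s := by gcongr
      _ = s := one_mul s
  have habs : |((n : ℤ) : ℝ) + 1| = n + 1 := by
    rw [Int.cast_natCast]
    exact abs_of_nonneg (by positivity)
  calc s⁻¹ ^ n ^ 2 * Real.exp (-(5 * (1 - s)⁻¹))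
      ≤ ‖thetaTerm q x n‖ * Real.exp (-(5 * (1 - s)⁻¹)) := by
        gcongr
        exact inv_pow_sq_le_norm_thetaTerm hs0 hq hlo
    _ ≤ _ := habs ▸ norm_thetaTerm_mul_exp_neg_le hs1 hqs hq0 hx hinner houter

theorem norm_mul_inv_pow_sq_le_of_multiple_zero {n : ℕ} (hs0 : 0 < s) (hs1 : s < 1)
    (hq : ‖q‖ = s ^ 2) (hx : 8 ≤ ‖x‖) (hzero : partialTheta q x = 0)
    (hderiv : deriv (partialTheta q) x = 0) (hlo : 1 ≤ ‖x‖ * s ^ (2 * n + 1))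
    (hhi : ‖x‖ * s ^ (2 * n + 3) ≤ 1) :
    ‖x‖ * s⁻¹ ^ n ^ 2 ≤ (2 * n + 5 + 4 * (1 - s)⁻¹ ^ 2) * Real.exp (5 * (1 - s)⁻¹) := by
  have hq1 : ‖q‖ < 1 := hq.trans_lt (pow_lt_one₀ hs0.le hs1 two_ne_zero)
  have hx0 : 0 < ‖x‖ := by linarith
  have hΘ := norm_bilateralTheta_le_of_eq_zero hq1 (by linarith) hzero
  have hΘ' := norm_mul_deriv_bilateralTheta_le_of_deriv_eq_zero hq1 hx hderiv
  have h : s⁻¹ ^ n ^ 2 * Real.exp (-(5 * (1 - s)⁻¹)) ≤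
      (2 * n + 5 + 4 * (1 - s)⁻¹ ^ 2) / ‖x‖ := by
    calc _ ≤ _ := inv_pow_sq_mul_exp_neg_le hs0 hs1 hq hlo hhi
      _ ≤ 3 / ‖x‖ + (n + 1 + 2 * (1 - s)⁻¹ ^ 2) * (2 / ‖x‖) := by gcongr
      _ = (2 * n + 5 + 4 * (1 - s)⁻¹ ^ 2) / ‖x‖ := by ring
  rwa [Real.exp_neg, ← div_eq_mul_inv, div_le_div_iff₀ (Real.exp_pos _) hx0, mul_comm _ ‖x‖] at h

end MultipleZero

theorem no_large_multiple_zero_large_q_general (q : ℂ) (hq : ‖q‖ < 1) :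
    ¬ ∃ ζ : ℂ, (8 : ℝ) ^ 11 < ‖ζ‖ ∧
      (∑' j : ℕ, q ^ (j * (j + 1) / 2) * ζ ^ j = 0) ∧
      deriv (fun x : ℂ => ∑' j : ℕ, q ^ (j * (j + 1) / 2) * x ^ j) ζ = 0 := by
  rintro ⟨ζ, hζ, hzero, hderiv⟩
  have hqζ : 1 / 2 ≤ ‖q * ζ‖ := not_lt.1 fun h ↦ partialTheta_ne_zero hq h hzero
  rw [norm_mul] at hqζ
  obtain ⟨s, hs0, hqs⟩ : ∃ s : ℝ, 0 < s ∧ ‖q‖ = s ^ 2 :=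
    ⟨√‖q‖, Real.sqrt_pos.2 (by nlinarith), (Real.sq_sqrt (norm_nonneg q)).symm⟩
  have hs1 : s < 1 := (sq_lt_one_iff₀ hs0.le).1 (hqs ▸ hq)
  have hζs : 1 ≤ ‖ζ‖ * s := by
    refine (one_le_sq_iff₀ (by positivity)).1 ?_
    calc 1 ≤ ‖ζ‖ * (1 / 2) := by linarith
      _ ≤ ‖ζ‖ * (‖q‖ * ‖ζ‖) := by gcongr
      _ = (‖ζ‖ * s) ^ 2 := by rw [hqs]; ring
  obtain ⟨n, hlo, hhi⟩ := exists_one_le_mul_pow_and_mul_pow_lt_one hs0 hs1 hζs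
  have hle := norm_mul_inv_pow_sq_le_of_multiple_zero hs0 hs1 hqs (by linarith) hzero hderiv
    hlo hhi.le
  have hweight := weight_mul_exp_le hs0 hs1 (K := n) <|
    (mul_le_mul_of_nonneg_right hζ.le (by positivity)).trans hhi.le
  exact hζ.not_ge (le_of_mul_le_mul_right (hle.trans hweight) (by positivity))

/-- For `1/2 ≤ |q| < 1` the partial theta function `θ(q,·)` has no multiple zero `ζ` with
`|ζ| > 8^11`. -/
theorem no_large_multiple_zero_large_q (q : ℂ) (hq1 : 1 / 2 ≤ ‖q‖) (hq2 : ‖q‖ < 1) :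
    ¬ ∃ ζ : ℂ, (8 : ℝ) ^ 11 < ‖ζ‖ ∧
      (∑' j : ℕ, q ^ (j * (j + 1) / 2) * ζ ^ j = 0) ∧
      deriv (fun x : ℂ => ∑' j : ℕ, q ^ (j * (j + 1) / 2) * x ^ j) ζ = 0 :=
  no_large_multiple_zero_large_q_general q hq2
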